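/- Let G be a finite tree, i.e., a connected acyclic simple graph on a finite nonempty vertex type V. Then for every σ : V → F₂ with ∑_{v ∈ V} σ(v) = 0 in F₂, there exists a unique x : E(G) → F₂ such that ∂x = σ, where ∂ is the F₂ edge-boundary map of G. -/

import Mathlib

/-!
Existence uses only connectivity: the boundary of a single edge `uw` is `δ_u + δ_w`, so summing
along walks every `δ_u + δ_w` lies in the range of the (linear) boundary map. Fixing a root `r`,
an even syndrome `σ` equals `∑ v, σ v • (δ_v + δ_r)`, because the coefficients of `δ_r` add up
to `∑ v, σ v = 0`.

Uniqueness uses only acyclicity: every edge `e = uw` is a bridge, so the component `S` of `u` in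
`G - e` contains `u` but not `w`, while any other edge has both or neither of its ends in `S`.
Hence `∑ v ∈ S, (∂x) v = x e`, and `x` is determined by `∂x`.
-/

open Finset

/-- The `F₂` edge-boundary map of a simple graph: it sends a function
`x : E(G) → F₂` to the function `V → F₂` whose value at `v` is the sum, over the
edges incident to `v`, of the values of `x`. -/
def edgeBoundary {V : Type*} [Fintype V] [DecidableEq V] (G : SimpleGraph V)
    [DecidableRel G.Adj] (x : G.edgeSet → ZMod 2) (v : V) : ZMod 2 :=
  ∑ e : G.edgeSet, if v ∈ (e : Sym2 V) then x e else 0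

section

variable {V : Type*} [Fintype V] [DecidableEq V] (G : SimpleGraph V) [DecidableRel G.Adj]

/-- `edgeBoundary` bundled as an `F₂`-linear map. -/
def edgeBoundaryLin : (G.edgeSet → ZMod 2) →ₗ[ZMod 2] (V → ZMod 2) where
  toFun := edgeBoundary G
  map_add' x y := by
    funext v
    simp only [edgeBoundary, Pi.add_apply, ← Finset.sum_add_distrib]
    exact Finset.sum_congr rfl fun e _ => by split_ifs <;> simp
  map_smul' c x := by
    funext v
    simp [edgeBoundary, Finset.mul_sum]

lemma edgeBoundary_single {u w : V} (h : G.Adj u w) :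
    edgeBoundary G (Pi.single ⟨s(u, w), h⟩ 1) = Pi.single u 1 + Pi.single w 1 := by
  funext v
  have hne := h.ne
  rw [edgeBoundary, Finset.sum_eq_single ⟨s(u, w), h⟩]
  · by_cases hu : v = u
    · subst hu
      simp [hne]
    · by_cases hw : v = w
      · subst hw
        simp [hu]
      · simp [hu, hw]
  · intro e _ he
    simp [Pi.single_eq_of_ne he]
  · simp

lemma pi_add_self {ι : Type*} (f : ι → ZMod 2) : f + f = 0 :=
  funext fun v => CharTwo.add_self_eq_zero (f v)

lemma single_add_single_mem_range {u w : V} (p : G.Walk u w) :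
    (Pi.single u 1 + Pi.single w 1 : V → ZMod 2) ∈ LinearMap.range (edgeBoundaryLin G) := by
  induction p with
  | nil =>
    rw [pi_add_self]
    exact Submodule.zero_mem _
  | @cons a b c h p ih =>
    have h1 : (Pi.single a 1 + Pi.single b 1 : V → ZMod 2) ∈
        LinearMap.range (edgeBoundaryLin G) := ⟨_, edgeBoundary_single G h⟩
    have h2 := Submodule.add_mem _ h1 ih
    -- the two copies of `δ_b` cancel in characteristic two
    rwa [add_assoc, ← add_assoc (Pi.single b 1), pi_add_self, zero_add] at h2

lemma mem_range_edgeBoundaryLin (hG : G.Connected) (σ : V → ZMod 2) (hσ : ∑ v, σ v = 0) :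
    σ ∈ LinearMap.range (edgeBoundaryLin G) := by
  obtain ⟨r⟩ := hG.nonempty
  have key : σ = ∑ v, σ v • (Pi.single v 1 + Pi.single r 1 : V → ZMod 2) := by
    simp only [smul_add, Finset.sum_add_distrib, ← Finset.sum_smul, hσ, zero_smul, add_zero]
    exact pi_eq_sum_univ' σ
  rw [key]
  refine Submodule.sum_mem _ fun v _ => Submodule.smul_mem _ _ ?_
  obtain ⟨p⟩ := hG.preconnected v r
  exact single_add_single_mem_range G p

/-- Summing the boundary of `x` over a vertex set `S` counts each edge with the number of its ends
in `S`. If `e` is the only edge with exactly one end in `S`, only `x e` survives modulo two. -/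
lemma sum_edgeBoundary_eq (x : G.edgeSet → ZMod 2) (S : Finset V) {u w : V} (h : G.Adj u w)
    (hu : u ∈ S) (hw : w ∉ S)
    (hS : ∀ a b, G.Adj a b → s(a, b) ≠ s(u, w) → (a ∈ S ↔ b ∈ S)) :
    ∑ v ∈ S, edgeBoundary G x v = x ⟨s(u, w), h⟩ := by
  have count : ∀ a b (hab : G.Adj a b), (∑ v ∈ S, if v ∈ s(a, b) then x ⟨s(a, b), hab⟩ else 0) =
      (if a ∈ S then x ⟨s(a, b), hab⟩ else 0) + (if b ∈ S then x ⟨s(a, b), hab⟩ else 0) := by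
    intro a b hab
    rw [← Finset.sum_ite_eq' S a (fun _ => x ⟨s(a, b), hab⟩),
      ← Finset.sum_ite_eq' S b (fun _ => x ⟨s(a, b), hab⟩), ← Finset.sum_add_distrib]
    refine Finset.sum_congr rfl fun v _ => ?_
    have hne := hab.ne
    by_cases hva : v = a
    · subst hva
      simp [hne]
    · simp [hva]
  simp only [edgeBoundary]
  rw [Finset.sum_comm, Finset.sum_eq_single ⟨s(u, w), h⟩]
  · rw [count u w h]
    simp [hu, hw]
  · rintro ⟨e, he⟩ - hne
    induction e using Sym2.ind with
    | _ a b =>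
      rw [count a b he]
      have := hS a b he (fun h' => hne (Subtype.ext h'))
      by_cases ha : a ∈ S
      · simp [ha, this.mp ha, CharTwo.add_self_eq_zero]
      · simp [ha, mt this.mpr ha]
  · simp

lemma edgeBoundary_injective (hG : G.IsAcyclic) : Function.Injective (edgeBoundary G) := by
  classical
  intro x y hxy
  funext ⟨e, he⟩
  induction e using Sym2.ind with
  | _ u w =>
    have hb : ¬ (G.deleteEdges {s(u, w)}).Reachable u w :=
      SimpleGraph.isBridge_iff.mp (SimpleGraph.isAcyclic_iff_forall_isBridge.mp hG he)
    let S : Finset V := {v | (G.deleteEdges {s(u, w)}).Reachable u v}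
    have hS : ∀ a b, G.Adj a b → s(a, b) ≠ s(u, w) → (a ∈ S ↔ b ∈ S) := by
      intro a b hab hne
      have hadj : (G.deleteEdges {s(u, w)}).Adj a b := by
        rw [SimpleGraph.deleteEdges_adj]
        exact ⟨hab, hne⟩
      simp only [S, Finset.mem_filter, Finset.mem_univ, true_and]
      exact ⟨fun h => h.trans hadj.reachable, fun h => h.trans hadj.symm.reachable⟩
    have hu : u ∈ S := by simp [S]
    have hw : w ∉ S := by simpa [S] using hb
    rw [← sum_edgeBoundary_eq G x S he hu hw hS, ← sum_edgeBoundary_eq G y S he hu hw hS, hxy]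

end

/-- On a finite tree, every even-parity syndrome is the boundary of a unique set
of edges. -/
theorem existsUnique_edgeBoundary_eq_of_isTree
    {V : Type*} [Fintype V] [DecidableEq V] [Nonempty V]
    (G : SimpleGraph V) [DecidableRel G.Adj]
    (hG : G.Connected) (hG' : G.IsAcyclic)
    (σ : V → ZMod 2) (hσ : ∑ v : V, σ v = 0) :
    ∃! x : G.edgeSet → ZMod 2, edgeBoundary G x = σ := by
  obtain ⟨x, hx⟩ := mem_range_edgeBoundaryLin G hG σ hσ
  exact ⟨x, hx, fun y hy => edgeBoundary_injective G hG' (hy.trans hx.symm)⟩
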